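/- Suppose there exist a symmetric positive definite n×n matrix Y and constants α, β_ω, β_v, β_e, β_r ≥ 0 such that −𝓜̃ − α 𝓝̃ − β_ω S_ω − β_v S_v − β_e S_e − β_r S_r is positive semidefinite, where 𝓜̃ is the symmetric block matrix of size n+p+q+m+s+1 with (1,1) block Y Aᵀ + A Y, (2,1) block Gᵀ, (3,1) block B_vᵀ, (4,1) block B_eᵀ, (5,1) block B_rᵀ, all other blocks zero; 𝓝̃ = diag(Y, 0, 0, 0, 0, −1); S_ω = diag(0, −W_ω, 0, 0, 0, 1); S_v = diag(0, 0, −W_v, 0, 0, 1); S_e = diag(0, 0, 0, −P̄_e, 0, 1); S_r = diag(0, 0, 0, 0, −Π, 1). Then, with P = Y⁻¹, the ellipsoid ℰ = {ζ ∈ ℝⁿ : ζᵀ P ζ ≤ 1} is forward invariant for the closed-loop system: for every differentiable trajectory ζ : [0,∞) → ℝⁿ satisfying ζ̇(t) = A ζ(t) + G ω(t) + B_v v(t) + B_e ē(t) + B_r r(t) with ω(t)ᵀ W_ω ω(t) ≤ 1, v(t)ᵀ W_v v(t) ≤ 1, ē(t)ᵀ P̄_e ē(t) ≤ 1, r(t)ᵀ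 Π r(t) ≤ 1 for all t, ζ(0) ∈ ℰ implies ζ(t) ∈ ℰ for all t ≥ 0. -/

import Mathlib

open Matrix MeasureTheory Filter

/-- Index type for the stacked vector κ = (ζ, ω, v, ē, r, 1). -/
abbrev Idx (n p q m s : ℕ) := Fin n ⊕ Fin p ⊕ Fin q ⊕ Fin m ⊕ Fin s ⊕ Fin 1

noncomputable section

variable {n p q m s : ℕ}

/-- The stacked vector κ = (ζ, ω, v, ē, r, 1). -/
def stack (z : Fin n → ℝ) (w : Fin p → ℝ) (v : Fin q → ℝ) (e : Fin m → ℝ)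
    (r : Fin s → ℝ) : Idx n p q m s → ℝ :=
  Sum.elim z (Sum.elim w (Sum.elim v (Sum.elim e (Sum.elim r (fun _ => 1)))))

/-- The symmetric block matrix 𝓜 with (1,1) block Aᵀ P + P A and
(2,1),(3,1),(4,1),(5,1) blocks GᵀP, Bvᵀ P, Beᵀ P, Brᵀ P, all other blocks zero. -/
def bigM (P A : Matrix (Fin n) (Fin n) ℝ) (G : Matrix (Fin n) (Fin p) ℝ)
    (Bv : Matrix (Fin n) (Fin q) ℝ) (Be : Matrix (Fin n) (Fin m) ℝ)
    (Br : Matrix (Fin n) (Fin s) ℝ) : Matrix (Idx n p q m s) (Idx n p q m s) ℝ :=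
  Matrix.of fun i j => match i, j with
  | Sum.inl i, Sum.inl j => (Aᵀ * P + P * A) i j
  | Sum.inl i, Sum.inr (Sum.inl j) => (P * G) i j
  | Sum.inr (Sum.inl i), Sum.inl j => (Gᵀ * P) i j
  | Sum.inl i, Sum.inr (Sum.inr (Sum.inl j)) => (P * Bv) i j
  | Sum.inr (Sum.inr (Sum.inl i)), Sum.inl j => (Bvᵀ * P) i j
  | Sum.inl i, Sum.inr (Sum.inr (Sum.inr (Sum.inl j))) => (P * Be) i j
  | Sum.inr (Sum.inr (Sum.inr (Sum.inl i))), Sum.inl j => (Beᵀ * P) i j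
  | Sum.inl i, Sum.inr (Sum.inr (Sum.inr (Sum.inr (Sum.inl j)))) => (P * Br) i j
  | Sum.inr (Sum.inr (Sum.inr (Sum.inr (Sum.inl i)))), Sum.inl j => (Brᵀ * P) i j
  | _, _ => 0

/-- The congruence-transformed block matrix 𝓜̃ with (1,1) block Y Aᵀ + A Y and
(2,1),(3,1),(4,1),(5,1) blocks Gᵀ, Bvᵀ, Beᵀ, Brᵀ, all other blocks zero. -/
def bigMt (Y A : Matrix (Fin n) (Fin n) ℝ) (G : Matrix (Fin n) (Fin p) ℝ)
    (Bv : Matrix (Fin n) (Fin q) ℝ) (Be : Matrix (Fin n) (Fin m) ℝ)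
    (Br : Matrix (Fin n) (Fin s) ℝ) : Matrix (Idx n p q m s) (Idx n p q m s) ℝ :=
  Matrix.of fun i j => match i, j with
  | Sum.inl i, Sum.inl j => (Y * Aᵀ + A * Y) i j
  | Sum.inl i, Sum.inr (Sum.inl j) => G i j
  | Sum.inr (Sum.inl i), Sum.inl j => Gᵀ i j
  | Sum.inl i, Sum.inr (Sum.inr (Sum.inl j)) => Bv i j
  | Sum.inr (Sum.inr (Sum.inl i)), Sum.inl j => Bvᵀ i j
  | Sum.inl i, Sum.inr (Sum.inr (Sum.inr (Sum.inl j))) => Be i j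
  | Sum.inr (Sum.inr (Sum.inr (Sum.inl i))), Sum.inl j => Beᵀ i j
  | Sum.inl i, Sum.inr (Sum.inr (Sum.inr (Sum.inr (Sum.inl j)))) => Br i j
  | Sum.inr (Sum.inr (Sum.inr (Sum.inr (Sum.inl i)))), Sum.inl j => Brᵀ i j
  | _, _ => 0

/-- 𝓝 = diag(P, 0, 0, 0, 0, −1). -/
def bigN (P : Matrix (Fin n) (Fin n) ℝ) : Matrix (Idx n p q m s) (Idx n p q m s) ℝ :=
  Matrix.of fun i j => match i, j with
  | Sum.inl i, Sum.inl j => P i j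
  | Sum.inr (Sum.inr (Sum.inr (Sum.inr (Sum.inr _)))),
    Sum.inr (Sum.inr (Sum.inr (Sum.inr (Sum.inr _)))) => -1
  | _, _ => 0

/-- S_ω = diag(0, −W_ω, 0, 0, 0, 1). -/
def Sw (W : Matrix (Fin p) (Fin p) ℝ) : Matrix (Idx n p q m s) (Idx n p q m s) ℝ :=
  Matrix.of fun i j => match i, j with
  | Sum.inr (Sum.inl i), Sum.inr (Sum.inl j) => -W i j
  | Sum.inr (Sum.inr (Sum.inr (Sum.inr (Sum.inr _)))),
    Sum.inr (Sum.inr (Sum.inr (Sum.inr (Sum.inr _)))) => 1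
  | _, _ => 0

/-- S_v = diag(0, 0, −W_v, 0, 0, 1). -/
def Sv (W : Matrix (Fin q) (Fin q) ℝ) : Matrix (Idx n p q m s) (Idx n p q m s) ℝ :=
  Matrix.of fun i j => match i, j with
  | Sum.inr (Sum.inr (Sum.inl i)), Sum.inr (Sum.inr (Sum.inl j)) => -W i j
  | Sum.inr (Sum.inr (Sum.inr (Sum.inr (Sum.inr _)))),
    Sum.inr (Sum.inr (Sum.inr (Sum.inr (Sum.inr _)))) => 1
  | _, _ => 0

/-- S_e = diag(0, 0, 0, −P̄_e, 0, 1). -/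
def Se (W : Matrix (Fin m) (Fin m) ℝ) : Matrix (Idx n p q m s) (Idx n p q m s) ℝ :=
  Matrix.of fun i j => match i, j with
  | Sum.inr (Sum.inr (Sum.inr (Sum.inl i))),
    Sum.inr (Sum.inr (Sum.inr (Sum.inl j))) => -W i j
  | Sum.inr (Sum.inr (Sum.inr (Sum.inr (Sum.inr _)))),
    Sum.inr (Sum.inr (Sum.inr (Sum.inr (Sum.inr _)))) => 1
  | _, _ => 0

/-- S_r = diag(0, 0, 0, 0, −Π, 1). -/
def Sr (W : Matrix (Fin s) (Fin s) ℝ) : Matrix (Idx n p q m s) (Idx n p q m s) ℝ :=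
  Matrix.of fun i j => match i, j with
  | Sum.inr (Sum.inr (Sum.inr (Sum.inr (Sum.inl i)))),
    Sum.inr (Sum.inr (Sum.inr (Sum.inr (Sum.inl j)))) => -W i j
  | Sum.inr (Sum.inr (Sum.inr (Sum.inr (Sum.inr _)))),
    Sum.inr (Sum.inr (Sum.inr (Sum.inr (Sum.inr _)))) => 1
  | _, _ => 0

end

/-!
The quadratic form of the LMI at the stacked vector `κ = (Y⁻¹ ζ, ω, v, ē, r, 1)` is the
dissipation inequality for `V ζ = ζᵀ Y⁻¹ ζ`: since `Y (Y⁻¹ ζ) = ζ`, the congruence relating the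
LMI in `Y` to the one in `P = Y⁻¹` amounts to this choice of test vector, and the value of `𝓜̃`
there is the derivative of `V` along the dynamics. The multipliers `β` only contribute nonnegative
terms for admissible disturbances, which leaves `V' ≤ α (1 - V)`. Grönwall's inequality applied
to `V - 1` then keeps `V ≤ 1`.
-/

theorem le_of_deriv_right_le_mul_sub {f f' : ℝ → ℝ} {a c K : ℝ}
    (hf : ContinuousOn f (Set.Ici a))
    (hf' : ∀ t ∈ Set.Ici a, HasDerivWithinAt f (f' t) (Set.Ici t) t)
    (ha : f a ≤ c) (bound : ∀ t ∈ Set.Ici a, f' t ≤ K * (c - f t)) :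
    ∀ t ∈ Set.Ici a, f t ≤ c := by
  intro t ht
  have hgronwall : f t - c ≤ gronwallBound 0 (-K) 0 (t - a) :=
    le_gronwallBound_of_liminf_deriv_right_le (f := fun x ↦ f x - c) (b := t)
      ((hf.mono Set.Icc_subset_Ici_self).sub continuousOn_const)
      (fun x hx _ hr ↦ ((hf' x hx.1).sub_const c).liminf_right_slope_le hr)
      (sub_nonpos.2 ha) (fun x hx ↦ by linarith [bound x hx.1]) t ⟨ht, le_rfl⟩
  rw [gronwallBound_ε0_δ0] at hgronwall
  exact sub_nonpos.1 hgronwall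

section QuadraticForm

theorem dotProduct_mulVec_of_isSymm {R ι : Type*} [CommSemiring R] [Fintype ι]
    {P : Matrix ι ι R} (hP : P.IsSymm) (x y : ι → R) : x ⬝ᵥ P *ᵥ y = (P *ᵥ x) ⬝ᵥ y := by
  rw [dotProduct_mulVec, ← mulVec_transpose, hP.eq]

variable {𝕜 ι κ : Type*} [NontriviallyNormedField 𝕜] [Fintype ι] {s : Set 𝕜} {t : 𝕜}

theorem hasDerivWithinAt_dotProduct {x y : 𝕜 → ι → 𝕜} {x' y' : ι → 𝕜}
    (hx : HasDerivWithinAt x x' s t) (hy : HasDerivWithinAt y y' s t) :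
    HasDerivWithinAt (fun τ ↦ x τ ⬝ᵥ y τ) (x' ⬝ᵥ y t + x t ⬝ᵥ y') s t := by
  simp only [dotProduct, ← Finset.sum_add_distrib]
  exact .fun_sum fun i _ ↦ (hasDerivWithinAt_pi.1 hx i).mul (hasDerivWithinAt_pi.1 hy i)

theorem hasDerivWithinAt_mulVec (B : Matrix κ ι 𝕜) {x : 𝕜 → ι → 𝕜} {x' : ι → 𝕜}
    (hx : HasDerivWithinAt x x' s t) :
    HasDerivWithinAt (fun τ ↦ B *ᵥ x τ) (B *ᵥ x') s t :=
  hasDerivWithinAt_pi.2 fun i ↦ by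
    simpa only [mulVec, zero_dotProduct, zero_add] using
      hasDerivWithinAt_dotProduct (hasDerivWithinAt_const t s (B i)) hx

theorem hasDerivWithinAt_dotProduct_mulVec_self {P : Matrix ι ι 𝕜} (hP : P.IsSymm)
    {x : 𝕜 → ι → 𝕜} {x' : ι → 𝕜} (hx : HasDerivWithinAt x x' s t) :
    HasDerivWithinAt (fun τ ↦ x τ ⬝ᵥ P *ᵥ x τ) (2 * ((P *ᵥ x t) ⬝ᵥ x')) s t := by
  convert hasDerivWithinAt_dotProduct hx (hasDerivWithinAt_mulVec P hx) using 1
  rw [dotProduct_comm x', dotProduct_mulVec_of_isSymm hP (x t), two_mul]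

theorem dotProduct_mulVec_self_le_of_deriv_right_le {P : Matrix ι ι ℝ} (hP : P.IsSymm)
    {x x' : ℝ → ι → ℝ} {a c K : ℝ} (hx : ContinuousOn x (Set.Ici a))
    (hx' : ∀ t ∈ Set.Ici a, HasDerivWithinAt x (x' t) (Set.Ici t) t)
    (ha : x a ⬝ᵥ P *ᵥ x a ≤ c)
    (bound : ∀ t ∈ Set.Ici a, 2 * ((P *ᵥ x t) ⬝ᵥ x' t) ≤ K * (c - x t ⬝ᵥ P *ᵥ x t)) :
    ∀ t ∈ Set.Ici a, x t ⬝ᵥ P *ᵥ x t ≤ c := by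
  have hcont : ContinuousOn (fun t ↦ x t ⬝ᵥ P *ᵥ x t) (Set.Ici a) :=
    (by fun_prop : Continuous fun y : ι → ℝ ↦ y ⬝ᵥ P *ᵥ y).comp_continuousOn hx
  exact le_of_deriv_right_le_mul_sub hcont
    (fun t ht ↦ hasDerivWithinAt_dotProduct_mulVec_self hP (hx' t ht)) ha bound

end QuadraticForm

section LMI

variable {n p q m s : ℕ}

/-- The right-hand side `A ζ + G ω + B_v v + B_e ē + B_r r` of the closed-loop dynamics, as a
function of the state and the disturbances. -/
def closedLoopField (A : Matrix (Fin n) (Fin n) ℝ) (G : Matrix (Fin n) (Fin p) ℝ)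
    (Bv : Matrix (Fin n) (Fin q) ℝ) (Be : Matrix (Fin n) (Fin m) ℝ)
    (Br : Matrix (Fin n) (Fin s) ℝ) (z : Fin n → ℝ) (w : Fin p → ℝ) (v : Fin q → ℝ)
    (e : Fin m → ℝ) (r : Fin s → ℝ) : Fin n → ℝ :=
  A *ᵥ z + G *ᵥ w + Bv *ᵥ v + Be *ᵥ e + Br *ᵥ r

variable (A : Matrix (Fin n) (Fin n) ℝ) (G : Matrix (Fin n) (Fin p) ℝ)
  (Bv : Matrix (Fin n) (Fin q) ℝ) (Be : Matrix (Fin n) (Fin m) ℝ) (Br : Matrix (Fin n) (Fin s) ℝ)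
  (z : Fin n → ℝ) (w : Fin p → ℝ) (v : Fin q → ℝ) (e : Fin m → ℝ) (r : Fin s → ℝ)

theorem stack_dotProduct_bigN_mulVec_stack (P : Matrix (Fin n) (Fin n) ℝ) :
    stack z w v e r ⬝ᵥ bigN P *ᵥ stack z w v e r = z ⬝ᵥ P *ᵥ z - 1 := by
  simp [stack, bigN, dotProduct, mulVec, sub_eq_add_neg]

theorem stack_dotProduct_Sw_mulVec_stack (W : Matrix (Fin p) (Fin p) ℝ) :
    stack z w v e r ⬝ᵥ Sw W *ᵥ stack z w v e r = 1 - w ⬝ᵥ W *ᵥ w := by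
  simp [stack, Sw, dotProduct, mulVec, neg_add_eq_sub]

theorem stack_dotProduct_Sv_mulVec_stack (W : Matrix (Fin q) (Fin q) ℝ) :
    stack z w v e r ⬝ᵥ Sv W *ᵥ stack z w v e r = 1 - v ⬝ᵥ W *ᵥ v := by
  simp [stack, Sv, dotProduct, mulVec, neg_add_eq_sub]

theorem stack_dotProduct_Se_mulVec_stack (W : Matrix (Fin m) (Fin m) ℝ) :
    stack z w v e r ⬝ᵥ Se W *ᵥ stack z w v e r = 1 - e ⬝ᵥ W *ᵥ e := by
  simp [stack, Se, dotProduct, mulVec, neg_add_eq_sub]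

theorem stack_dotProduct_Sr_mulVec_stack (W : Matrix (Fin s) (Fin s) ℝ) :
    stack z w v e r ⬝ᵥ Sr W *ᵥ stack z w v e r = 1 - r ⬝ᵥ W *ᵥ r := by
  simp [stack, Sr, dotProduct, mulVec, neg_add_eq_sub]

theorem bigMt_mulVec_stack (Y : Matrix (Fin n) (Fin n) ℝ) :
    bigMt Y A G Bv Be Br *ᵥ stack z w v e r =
      Sum.elim (Y *ᵥ Aᵀ *ᵥ z + closedLoopField A G Bv Be Br (Y *ᵥ z) w v e r)
        (Sum.elim (Gᵀ *ᵥ z) (Sum.elim (Bvᵀ *ᵥ z) (Sum.elim (Beᵀ *ᵥ z)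
          (Sum.elim (Brᵀ *ᵥ z) 0)))) := by
  simp only [closedLoopField, mulVec_mulVec, ← add_assoc, ← add_mulVec]
  ext (i | i | i | i | i | i) <;> simp [bigMt, stack, mulVec, dotProduct, add_assoc]

theorem stack_dotProduct_bigMt_mulVec_stack {Y : Matrix (Fin n) (Fin n) ℝ} (hY : Y.IsSymm) :
    stack z w v e r ⬝ᵥ bigMt Y A G Bv Be Br *ᵥ stack z w v e r =
      2 * (z ⬝ᵥ closedLoopField A G Bv Be Br (Y *ᵥ z) w v e r) := by
  have hYA : z ⬝ᵥ Y *ᵥ Aᵀ *ᵥ z = z ⬝ᵥ A *ᵥ Y *ᵥ z := by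
    rw [dotProduct_mulVec_of_isSymm hY, dotProduct_transpose_mulVec]
  rw [bigMt_mulVec_stack, stack]
  simp only [sumElim_dotProduct_sumElim, closedLoopField, dotProduct_add, dotProduct_zero, hYA,
    dotProduct_transpose_mulVec]
  ring

variable {A G Bv Be Br w v e r}

theorem two_mul_dotProduct_closedLoopField_le {Wω : Matrix (Fin p) (Fin p) ℝ}
    {Wv : Matrix (Fin q) (Fin q) ℝ} {Pe : Matrix (Fin m) (Fin m) ℝ}
    {Pim : Matrix (Fin s) (Fin s) ℝ} {Y : Matrix (Fin n) (Fin n) ℝ} (hY : Y.IsSymm)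
    {α βω βv βe βr : ℝ} (hβω : 0 ≤ βω) (hβv : 0 ≤ βv) (hβe : 0 ≤ βe) (hβr : 0 ≤ βr)
    (hLMI : (-(bigMt Y A G Bv Be Br) - α • bigN Y - βω • Sw Wω - βv • Sv Wv
      - βe • Se Pe - βr • Sr Pim).PosSemidef)
    (hw : w ⬝ᵥ Wω *ᵥ w ≤ 1) (hv : v ⬝ᵥ Wv *ᵥ v ≤ 1) (he : e ⬝ᵥ Pe *ᵥ e ≤ 1)
    (hr : r ⬝ᵥ Pim *ᵥ r ≤ 1) :
    2 * (z ⬝ᵥ closedLoopField A G Bv Be Br (Y *ᵥ z) w v e r) ≤ α * (1 - z ⬝ᵥ Y *ᵥ z) := by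
  have hquad := hLMI.dotProduct_mulVec_nonneg (stack z w v e r)
  simp only [star_trivial, sub_mulVec, neg_mulVec, smul_mulVec, dotProduct_sub, dotProduct_neg,
    dotProduct_smul, smul_eq_mul, stack_dotProduct_bigMt_mulVec_stack (hY := hY),
    stack_dotProduct_bigN_mulVec_stack, stack_dotProduct_Sw_mulVec_stack,
    stack_dotProduct_Sv_mulVec_stack, stack_dotProduct_Se_mulVec_stack,
    stack_dotProduct_Sr_mulVec_stack] at hquad
  linarith [mul_nonneg hβω (sub_nonneg.2 hw), mul_nonneg hβv (sub_nonneg.2 hv),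
    mul_nonneg hβe (sub_nonneg.2 he), mul_nonneg hβr (sub_nonneg.2 hr)]

end LMI

theorem stmt5_general {n p q m s : ℕ}
    {A : Matrix (Fin n) (Fin n) ℝ} {G : Matrix (Fin n) (Fin p) ℝ}
    {Bv : Matrix (Fin n) (Fin q) ℝ} {Be : Matrix (Fin n) (Fin m) ℝ}
    {Br : Matrix (Fin n) (Fin s) ℝ} {Wω : Matrix (Fin p) (Fin p) ℝ}
    {Wv : Matrix (Fin q) (Fin q) ℝ} {Pe : Matrix (Fin m) (Fin m) ℝ}
    {Pim : Matrix (Fin s) (Fin s) ℝ} {Y : Matrix (Fin n) (Fin n) ℝ} (hY : Y.IsSymm)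
    (hYunit : IsUnit Y) {α βω βv βe βr : ℝ} (hβω : 0 ≤ βω) (hβv : 0 ≤ βv)
    (hβe : 0 ≤ βe) (hβr : 0 ≤ βr)
    (hLMI : (-(bigMt Y A G Bv Be Br) - α • bigN Y - βω • Sw Wω - βv • Sv Wv
      - βe • Se Pe - βr • Sr Pim).PosSemidef)
    {ζ : ℝ → Fin n → ℝ} {ω : ℝ → Fin p → ℝ} {v : ℝ → Fin q → ℝ}
    {e : ℝ → Fin m → ℝ} {r : ℝ → Fin s → ℝ}
    (hζ : ContinuousOn ζ (Set.Ici 0))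
    (hdyn : ∀ t ∈ Set.Ici (0 : ℝ), HasDerivWithinAt ζ
      (closedLoopField A G Bv Be Br (ζ t) (ω t) (v t) (e t) (r t)) (Set.Ici t) t)
    (hω : ∀ t ∈ Set.Ici (0 : ℝ), ω t ⬝ᵥ Wω *ᵥ ω t ≤ 1)
    (hv : ∀ t ∈ Set.Ici (0 : ℝ), v t ⬝ᵥ Wv *ᵥ v t ≤ 1)
    (he : ∀ t ∈ Set.Ici (0 : ℝ), e t ⬝ᵥ Pe *ᵥ e t ≤ 1)
    (hr : ∀ t ∈ Set.Ici (0 : ℝ), r t ⬝ᵥ Pim *ᵥ r t ≤ 1)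
    (h0 : ζ 0 ⬝ᵥ Y⁻¹ *ᵥ ζ 0 ≤ 1) :
    ∀ t ∈ Set.Ici (0 : ℝ), ζ t ⬝ᵥ Y⁻¹ *ᵥ ζ t ≤ 1 := by
  refine dotProduct_mulVec_self_le_of_deriv_right_le hY.inv hζ hdyn h0 (K := α) fun t ht ↦ ?_
  have hYP : Y *ᵥ Y⁻¹ *ᵥ ζ t = ζ t := by
    rw [mulVec_mulVec, mul_nonsing_inv _ ((isUnit_iff_isUnit_det Y).1 hYunit), one_mulVec]
  have hdiss := two_mul_dotProduct_closedLoopField_le (Y⁻¹ *ᵥ ζ t) hY hβω hβv hβe hβr hLMI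
    (hω t ht) (hv t ht) (he t ht) (hr t ht)
  rwa [hYP, dotProduct_comm _ (ζ t)] at hdiss

/-- **forward invariance from the linearized LMI.** If Y ≻ 0 and the
congruence-transformed LMI −𝓜̃ − α𝓝̃ − βω Sω − βv Sv − βe Se − βr Sr ⪰ 0 is feasible,
then with P = Y⁻¹ the ellipsoid {ζ : ζᵀ P ζ ≤ 1} is forward invariant for every
trajectory of the closed-loop system under admissible disturbances. -/
theorem stmt5 {n p q m s : ℕ}
    (A : Matrix (Fin n) (Fin n) ℝ)
    (G : Matrix (Fin n) (Fin p) ℝ) (Bv : Matrix (Fin n) (Fin q) ℝ)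
    (Be : Matrix (Fin n) (Fin m) ℝ) (Br : Matrix (Fin n) (Fin s) ℝ)
    (Wω : Matrix (Fin p) (Fin p) ℝ) (hWω : Wω.PosDef)
    (Wv : Matrix (Fin q) (Fin q) ℝ) (hWv : Wv.PosDef)
    (Pe : Matrix (Fin m) (Fin m) ℝ) (hPe : Pe.PosDef)
    (Pim : Matrix (Fin s) (Fin s) ℝ) (hPim : Pim.PosDef)
    (Y : Matrix (Fin n) (Fin n) ℝ) (hY : Y.PosDef)
    (α βω βv βe βr : ℝ) (hα : 0 ≤ α) (hβω : 0 ≤ βω) (hβv : 0 ≤ βv)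
    (hβe : 0 ≤ βe) (hβr : 0 ≤ βr)
    (hLMI : (-(bigMt Y A G Bv Be Br) - α • bigN Y - βω • Sw Wω - βv • Sv Wv
              - βe • Se Pe - βr • Sr Pim).PosSemidef)
    (ζ : ℝ → Fin n → ℝ) (ω : ℝ → Fin p → ℝ) (v : ℝ → Fin q → ℝ)
    (e : ℝ → Fin m → ℝ) (r : ℝ → Fin s → ℝ)
    (hdyn : ∀ t ∈ Set.Ici (0:ℝ), HasDerivAt ζ
      (A *ᵥ ζ t + G *ᵥ ω t + Bv *ᵥ v t + Be *ᵥ e t + Br *ᵥ r t) t)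
    (hω : ∀ t ∈ Set.Ici (0:ℝ), ω t ⬝ᵥ Wω *ᵥ ω t ≤ 1)
    (hv : ∀ t ∈ Set.Ici (0:ℝ), v t ⬝ᵥ Wv *ᵥ v t ≤ 1)
    (he : ∀ t ∈ Set.Ici (0:ℝ), e t ⬝ᵥ Pe *ᵥ e t ≤ 1)
    (hr : ∀ t ∈ Set.Ici (0:ℝ), r t ⬝ᵥ Pim *ᵥ r t ≤ 1)
    (h0 : ζ 0 ⬝ᵥ Y⁻¹ *ᵥ ζ 0 ≤ 1) :
    ∀ t ∈ Set.Ici (0:ℝ), ζ t ⬝ᵥ Y⁻¹ *ᵥ ζ t ≤ 1 := by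
  exact stmt5_general (isHermitian_iff_isSymm.1 hY.isHermitian) hY.isUnit hβω hβv hβe hβr hLMI
    (fun t ht ↦ (hdyn t ht).continuousAt.continuousWithinAt)
    (fun t ht ↦ (hdyn t ht).hasDerivWithinAt) hω hv he hr h0
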